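/- Let n, Δ, k ∈ ℕ with Δ ≤ k and k ≤ n − Δ. The ℂ-vector space of all matrix differential operators 𝐓 of order at most k which preserve 𝓣 = 𝒯_{n−Δ} × 𝒯ₙ has dimension d satisfying 2·d = (k+1)(k+2)(2k² + 6k + 4 + Δ²). -/

import Mathlib

noncomputable section

open MvPolynomial

/-- The bivariate polynomial ring `R = ℂ[x,y]`. -/
abbrev R2 : Type := MvPolynomial (Fin 2) ℂ

/-- The variable `x`. -/
def Xv : R2 := X 0

/-- The variable `y`. -/
def Yv : R2 := X 1

/-- The partial derivative `∂_x` as a `ℂ`-linear endomorphism. -/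
def Dx : Module.End ℂ R2 := (pderiv (0 : Fin 2)).toLinearMap

/-- The partial derivative `∂_y` as a `ℂ`-linear endomorphism. -/
def Dy : Module.End ℂ R2 := (pderiv (1 : Fin 2)).toLinearMap

/-- Multiplication by `f` as an endomorphism. -/
def Mf (f : R2) : Module.End ℂ R2 := LinearMap.mulLeft ℂ f

/-- All compositions (products) of at most `k` elements of `S`; the empty
composition is the identity. -/
def prodsLE (k : ℕ) (S : Set (Module.End ℂ R2)) : Set (Module.End ℂ R2) :=
  {T | ∃ l : List (Module.End ℂ R2), l.length ≤ k ∧ (∀ a ∈ l, a ∈ S) ∧ l.prod = T}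

/-- The rectangular module `ℛ_{n,m}`. -/
def Rmod (n m : ℕ) : Submodule ℂ R2 :=
  Submodule.span ℂ {P : R2 | ∃ i j : ℕ, i ≤ n ∧ j ≤ m ∧ P = Xv ^ i * Yv ^ j}

/-- The triangular module `𝒯ₙ`. -/
def Tmod (n : ℕ) : Submodule ℂ R2 :=
  Submodule.span ℂ {P : R2 | ∃ i j : ℕ, i + j ≤ n ∧ P = Xv ^ i * Yv ^ j}

/-- The staircase module `𝒮^r_{p,q}`. -/
def Smod (r p q : ℕ) : Submodule ℂ R2 :=
  Submodule.span ℂ {P : R2 | ∃ i j : ℕ, i + r * j ≤ p ∧ j ≤ q ∧ P = Xv ^ i * Yv ^ j}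

/-- An endomorphism has nonpositive `y`-degree if it maps each monomial `xᵃyᵇ`
into the span of the monomials `x^c y^e` with `e ≤ b`. -/
def NonposY (T : Module.End ℂ R2) : Prop :=
  ∀ a b : ℕ, T (Xv ^ a * Yv ^ b) ∈
    Submodule.span ℂ {P : R2 | ∃ c e : ℕ, e ≤ b ∧ P = Xv ^ c * Yv ^ e}

/-- The rank-2 space `V = R × R`. -/
abbrev V2 : Type := R2 × R2

/-- The matrix operator `𝐓(u,v) = (A u + B v, C u + D v)`. -/
def matOp (A B C D : Module.End ℂ R2) : Module.End ℂ V2 :=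
  LinearMap.prod
    (A ∘ₗ LinearMap.fst ℂ R2 R2 + B ∘ₗ LinearMap.snd ℂ R2 R2)
    (C ∘ₗ LinearMap.fst ℂ R2 R2 + D ∘ₗ LinearMap.snd ℂ R2 R2)

/-- The diagonal matrix operator `diag(A, B)`. -/
def dg (A B : Module.End ℂ R2) : Module.End ℂ V2 := matOp A 0 0 B

/-- The scalar differential operator with coefficients `f` supported on `F`. -/
def diffOp (F : Finset (ℕ × ℕ)) (f : ℕ × ℕ → R2) : Module.End ℂ R2 :=
  ∑ ij ∈ F, Mf (f ij) * Dx ^ ij.1 * Dy ^ ij.2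

/-- The index set `{(i,j) : i + j ≤ k}`. -/
def ordIdx (k : ℕ) : Finset (ℕ × ℕ) :=
  (Finset.range (k + 1) ×ˢ Finset.range (k + 1)).filter (fun ij => ij.1 + ij.2 ≤ k)

/-- A scalar differential operator with polynomial coefficients, of order at most `k`. -/
def IsDiffOpLE (A : Module.End ℂ R2) (k : ℕ) : Prop :=
  ∃ f : ℕ × ℕ → R2, A = diffOp (ordIdx k) f

/-- A matrix differential operator of order at most `k`. -/
def IsMatDiffOpLE (P : Module.End ℂ V2) (k : ℕ) : Prop :=
  ∃ A B C D : Module.End ℂ R2, IsDiffOpLE A k ∧ IsDiffOpLE B k ∧ IsDiffOpLE C k ∧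
    IsDiffOpLE D k ∧ P = matOp A B C D

/-- Compositions of elements of `S` which are matrix differential operators of
order at most `k`. -/
def matProdsOrd (k : ℕ) (S : Set (Module.End ℂ V2)) : Set (Module.End ℂ V2) :=
  {P | ∃ l : List (Module.End ℂ V2), (∀ a ∈ l, a ∈ S) ∧ l.prod = P ∧ IsMatDiffOpLE P k}

/-- Compositions of at most `k` elements of `S`; the empty composition is the identity. -/
def matProdsLE (k : ℕ) (S : Set (Module.End ℂ V2)) : Set (Module.End ℂ V2) :=
  {P | ∃ l : List (Module.End ℂ V2), l.length ≤ k ∧ (∀ a ∈ l, a ∈ S) ∧ l.prod = P}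

/-!
Identify `𝒯ₐ` with the forms of degree `a` in `x, y, z` by setting `z = 1`. When `k ≤ a`, Euler's
identity expresses every derivative of order less than `k` of such a form through those of order
exactly `k`, so the derivatives `∂^β` with `|β| = k` in three variables form a basis, over
`ℂ[x, y]`, of the operators of order at most `k`. They map `𝒯ₐ` into `𝒯_{a-k}`, and testing on
suitable monomials shows triangularly that `∑ f_β ∂^β` maps `𝒯ₐ` into `𝒯_b` exactly when every
`f_β` lies in `𝒯_{b+k-a}`. The dimension of the space of matrix operators is the sum over its four
entries.
-/

/-- The basis `xⁱyʲ` of `ℂ[x,y]`, indexed by the pair of exponents. -/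
def xyBasis : Module.Basis (ℕ × ℕ) ℂ R2 :=
  (basisMonomials (Fin 2) ℂ).reindex (Finsupp.equivFunOnFinite.trans (finTwoArrowEquiv ℕ))

lemma monomial_eq_Xv_pow_mul_Yv_pow (m : Fin 2 →₀ ℕ) :
    monomial m (1 : ℂ) = Xv ^ m 0 * Yv ^ m 1 := by
  simp [monomial_eq, Finsupp.prod_fintype, Xv, Yv]

lemma xyBasis_apply (i j : ℕ) : xyBasis (i, j) = Xv ^ i * Yv ^ j := by
  rw [xyBasis, Module.Basis.reindex_apply, coe_basisMonomials]
  exact monomial_eq_Xv_pow_mul_Yv_pow _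

lemma end_ext {A B : Module.End ℂ R2}
    (h : ∀ p q, A (Xv ^ p * Yv ^ q) = B (Xv ^ p * Yv ^ q)) : A = B :=
  xyBasis.ext fun ⟨p, q⟩ => by simpa only [xyBasis_apply] using h p q

lemma mem_ordIdx {k : ℕ} {β : ℕ × ℕ} : β ∈ ordIdx k ↔ β.1 + β.2 ≤ k := by
  simp only [ordIdx, Finset.mem_filter, Finset.mem_product, Finset.mem_range]
  omega

lemma card_ordIdx_mul_two (k : ℕ) : (ordIdx k).card * 2 = (k + 1) * (k + 2) := by
  have hfibre : ∀ m ∈ Finset.range (k + 1),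
      ((ordIdx k).filter fun β => β.1 + β.2 = m) = Finset.HasAntidiagonal.antidiagonal m := by
    intro m hm
    ext β
    rw [Finset.mem_filter, mem_ordIdx, Finset.HasAntidiagonal.mem_antidiagonal]
    rw [Finset.mem_range] at hm
    omega
  have hcard : (ordIdx k).card = ∑ m ∈ Finset.range (k + 1), (m + 1) := by
    rw [Finset.card_eq_sum_card_fiberwise (f := fun β => β.1 + β.2) (t := Finset.range (k + 1))
      fun β hβ => by simpa [Nat.lt_succ_iff] using mem_ordIdx.mp hβ]
    exact Finset.sum_congr rfl fun m hm => by rw [hfibre m hm, Finset.Nat.card_antidiagonal]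
  have hshift := Finset.sum_range_succ' (fun m => m) (k + 1)
  rw [hcard, ← add_zero (∑ m ∈ Finset.range (k + 1), (m + 1)), ← hshift,
    Finset.sum_range_id_mul_two, Nat.add_sub_cancel, mul_comm]

lemma Tmod_eq_span_xyBasis (n : ℕ) : Tmod n = Submodule.span ℂ (xyBasis '' ordIdx n) := by
  rw [Tmod]
  congr 1
  ext P
  simp [mem_ordIdx, xyBasis_apply, eq_comm]

instance finite_Tmod (n : ℕ) : Module.Finite ℂ (Tmod n) := by
  rw [Tmod_eq_span_xyBasis]
  exact Module.Finite.span_of_finite ℂ ((ordIdx n).finite_toSet.image _)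

lemma finrank_Tmod (n : ℕ) : Module.finrank ℂ (Tmod n) = (ordIdx n).card := by
  have hli : LinearIndependent ℂ fun β : ordIdx n => xyBasis β :=
    xyBasis.linearIndependent.comp _ Subtype.val_injective
  rw [Tmod_eq_span_xyBasis, Set.image_eq_range]
  exact (finrank_span_eq_card hli).trans (Fintype.card_coe _)

lemma Tmod_eq_restrictTotalDegree (n : ℕ) : Tmod n = restrictTotalDegree (Fin 2) ℂ n := by
  rw [Tmod, restrictTotalDegree, restrictSupport_eq_span]
  congr 1
  ext P
  simp only [Set.mem_image, Set.mem_ofPred_eq, monomial_eq_Xv_pow_mul_Yv_pow]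
  constructor
  · rintro ⟨i, j, hij, rfl⟩
    refine ⟨Finsupp.equivFunOnFinite.symm ![i, j], ?_, by simp⟩
    simpa [Finsupp.sum_fintype] using hij
  · rintro ⟨m, hm, rfl⟩
    exact ⟨m 0, m 1, by simpa [Finsupp.sum_fintype] using hm, rfl⟩

lemma mem_Tmod {n : ℕ} {f : R2} : f ∈ Tmod n ↔ f.totalDegree ≤ n := by
  rw [Tmod_eq_restrictTotalDegree, mem_restrictTotalDegree]

lemma Xv_pow_mul_Yv_pow_mem_Tmod {p q n : ℕ} (h : p + q ≤ n) : Xv ^ p * Yv ^ q ∈ Tmod n :=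
  Submodule.subset_span ⟨p, q, h, rfl⟩

lemma mul_mem_Tmod {m n : ℕ} {f g : R2} (hf : f ∈ Tmod m) (hg : g ∈ Tmod n) :
    f * g ∈ Tmod (m + n) := by
  rw [mem_Tmod] at *
  exact (totalDegree_mul f g).trans (Nat.add_le_add hf hg)

lemma mem_Tmod_of_mul_Yv_pow_mem {m n : ℕ} {f : R2} (h : f * Yv ^ n ∈ Tmod (m + n)) :
    f ∈ Tmod m := by
  rcases eq_or_ne f 0 with rfl | hf
  · exact zero_mem _
  · rw [mem_Tmod, Yv, totalDegree_mul_of_isDomain hf (pow_ne_zero n (X_ne_zero 1)),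
      totalDegree_X_pow] at h
    exact mem_Tmod.mpr (Nat.le_of_add_le_add_right h)

lemma Dx_apply_Xv_pow_mul_Yv_pow (p q : ℕ) :
    Dx (Xv ^ p * Yv ^ q) = (p : ℂ) • (Xv ^ (p - 1) * Yv ^ q) := by
  change pderiv 0 (X 0 ^ p * X 1 ^ q : R2) = (p : ℂ) • (X 0 ^ (p - 1) * X 1 ^ q : R2)
  rw [pderiv_mul, pderiv_pow, pderiv_pow, pderiv_X_self, pderiv_X_of_ne one_ne_zero]
  simp only [mul_one, mul_zero, add_zero, smul_eq_C_mul, map_natCast, mul_assoc]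

lemma Dy_apply_Xv_pow_mul_Yv_pow (p q : ℕ) :
    Dy (Xv ^ p * Yv ^ q) = (q : ℂ) • (Xv ^ p * Yv ^ (q - 1)) := by
  change pderiv 1 (X 0 ^ p * X 1 ^ q : R2) = (q : ℂ) • (X 0 ^ p * X 1 ^ (q - 1) : R2)
  rw [pderiv_mul, pderiv_pow, pderiv_pow, pderiv_X_self, pderiv_X_of_ne zero_ne_one]
  simp only [mul_one, mul_zero, zero_mul, zero_add, smul_eq_C_mul, map_natCast]
  ring

lemma Dx_pow_apply_Xv_pow_mul_Yv_pow (i p q : ℕ) :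
    (Dx ^ i) (Xv ^ p * Yv ^ q) = (p.descFactorial i : ℂ) • (Xv ^ (p - i) * Yv ^ q) := by
  induction i with
  | zero => simp
  | succ i ih =>
    rw [pow_succ', Module.End.mul_apply, ih, map_smul, Dx_apply_Xv_pow_mul_Yv_pow, smul_smul,
      ← Nat.cast_mul, mul_comm, ← Nat.descFactorial_succ, Nat.sub_sub]

lemma Dy_pow_apply_Xv_pow_mul_Yv_pow (j p q : ℕ) :
    (Dy ^ j) (Xv ^ p * Yv ^ q) = (q.descFactorial j : ℂ) • (Xv ^ p * Yv ^ (q - j)) := by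
  induction j with
  | zero => simp
  | succ j ih =>
    rw [pow_succ', Module.End.mul_apply, ih, map_smul, Dy_apply_Xv_pow_mul_Yv_pow, smul_smul,
      ← Nat.cast_mul, mul_comm, ← Nat.descFactorial_succ, Nat.sub_sub]

/-- The Euler operator `x∂_x + y∂_y`. -/
def euler : Module.End ℂ R2 := Xv • Dx + Yv • Dy

lemma euler_apply_Xv_pow_mul_Yv_pow (p q : ℕ) :
    euler (Xv ^ p * Yv ^ q) = (p + q : ℂ) • (Xv ^ p * Yv ^ q) := by
  have hX : Xv * ((p : ℂ) • (Xv ^ (p - 1) * Yv ^ q)) = (p : ℂ) • (Xv ^ p * Yv ^ q) := by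
    cases p with
    | zero => simp
    | succ p => rw [Nat.add_sub_cancel, mul_smul_comm, ← mul_assoc, ← pow_succ']
  have hY : Yv * ((q : ℂ) • (Xv ^ p * Yv ^ (q - 1))) = (q : ℂ) • (Xv ^ p * Yv ^ q) := by
    cases q with
    | zero => simp
    | succ q => rw [Nat.add_sub_cancel, mul_smul_comm, mul_left_comm, ← pow_succ']
  rw [euler, LinearMap.add_apply, LinearMap.smul_apply, LinearMap.smul_apply,
    Dx_apply_Xv_pow_mul_Yv_pow, Dy_apply_Xv_pow_mul_Yv_pow, smul_eq_mul, smul_eq_mul, hX, hY,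
    add_smul]

/-- The operator induced on `𝒯ₐ` by `∂_xⁱ∂_yʲ∂_zʳ`, where `𝒯ₐ` is identified with the forms of
degree `a` in `x, y, z` by setting `z = 1`; there `z∂_z` acts as `a - (x∂_x + y∂_y)`. -/
def homDeriv (a i j r : ℕ) : Module.End ℂ R2 :=
  Dx ^ i * Dy ^ j *
    Polynomial.aeval (algebraMap ℂ (Module.End ℂ R2) a - euler) (descPochhammer ℂ r)

lemma homDeriv_zero_right (a i j : ℕ) : homDeriv a i j 0 = Dx ^ i * Dy ^ j := by
  simp [homDeriv]

lemma homDeriv_apply_Xv_pow_mul_Yv_pow (a i j r p q : ℕ) :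
    homDeriv a i j r (Xv ^ p * Yv ^ q) =
      (p.descFactorial i * q.descFactorial j * (descPochhammer ℂ r).eval (a - p - q : ℂ)) •
        (Xv ^ (p - i) * Yv ^ (q - j)) := by
  have heigen : (algebraMap ℂ (Module.End ℂ R2) a - euler) (Xv ^ p * Yv ^ q) =
      (a - p - q : ℂ) • (Xv ^ p * Yv ^ q) := by
    rw [LinearMap.sub_apply, Module.algebraMap_end_apply, euler_apply_Xv_pow_mul_Yv_pow,
      ← sub_smul, sub_sub]
  rw [homDeriv, Module.End.mul_apply, Module.End.aeval_apply_of_mem_apply_eq_smul heigen,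
    map_smul, Module.End.mul_apply, Dy_pow_apply_Xv_pow_mul_Yv_pow, map_smul,
    Dx_pow_apply_Xv_pow_mul_Yv_pow, smul_smul, smul_smul]
  congr 1
  ring

lemma homDeriv_apply_of_add_eq {a p q s : ℕ} (h : p + q + s = a) (i j r : ℕ) :
    homDeriv a i j r (Xv ^ p * Yv ^ q) =
      ((p.descFactorial i * q.descFactorial j * s.descFactorial r : ℕ) : ℂ) •
        (Xv ^ (p - i) * Yv ^ (q - j)) := by
  have hs : (a - p - q : ℂ) = s := by rw [← h]; push_cast; ring
  rw [homDeriv_apply_Xv_pow_mul_Yv_pow, hs, descPochhammer_eval_eq_descFactorial]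
  push_cast
  rfl

lemma le_of_homDeriv_apply_ne_zero {a p q s i j r : ℕ} (h : p + q + s = a)
    (hne : homDeriv a i j r (Xv ^ p * Yv ^ q) ≠ 0) : i ≤ p ∧ j ≤ q ∧ r ≤ s := by
  rw [homDeriv_apply_of_add_eq h] at hne
  have hcoeff := Nat.cast_ne_zero.mp (left_ne_zero_of_smul hne)
  simpa only [mul_ne_zero_iff, ne_eq, Nat.descFactorial_eq_zero_iff_lt, not_lt, and_assoc]
    using hcoeff

lemma commute_Dx_Dy : Commute Dx Dy :=
  end_ext fun p q => by
    simp only [Module.End.mul_apply, Dx_apply_Xv_pow_mul_Yv_pow, Dy_apply_Xv_pow_mul_Yv_pow,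
      map_smul, smul_comm (p : ℂ)]

lemma euler_mul_homDeriv (a i j r : ℕ) :
    euler * homDeriv a i j r = Xv • homDeriv a (i + 1) j r + Yv • homDeriv a i (j + 1) r := by
  have hDx : Dx ^ (i + 1) * Dy ^ j = Dx * (Dx ^ i * Dy ^ j) := by rw [pow_succ', mul_assoc]
  have hDy : Dx ^ i * Dy ^ (j + 1) = Dy * (Dx ^ i * Dy ^ j) := by
    rw [pow_succ', (commute_Dx_Dy.symm.pow_right i).left_comm]
  rw [homDeriv, homDeriv, homDeriv, hDx, hDy, euler, add_mul, mul_assoc Dx, mul_assoc Dy]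
  rfl

/-- Euler's identity for a form of degree `a - i - j - r`, namely `∂_xⁱ∂_yʲ∂_zʳF`. -/
lemma euler_identity_homDeriv (a i j r : ℕ) :
    Xv • homDeriv a (i + 1) j r + Yv • homDeriv a i (j + 1) r + homDeriv a i j (r + 1) =
      (a - i - j - r : ℂ) • homDeriv a i j r := by
  rw [← euler_mul_homDeriv]
  refine end_ext fun p q => ?_
  rw [LinearMap.add_apply, Module.End.mul_apply, LinearMap.smul_apply,
    homDeriv_apply_Xv_pow_mul_Yv_pow, homDeriv_apply_Xv_pow_mul_Yv_pow, map_smul,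
    euler_apply_Xv_pow_mul_Yv_pow, smul_smul, smul_smul, ← add_smul, descPochhammer_succ_eval]
  congr 1
  rcases lt_or_ge p i with hp | hp
  · rw [Nat.descFactorial_of_lt hp, Nat.cast_zero]
    ring
  rcases lt_or_ge q j with hq | hq
  · rw [Nat.descFactorial_of_lt hq, Nat.cast_zero]
    ring
  rw [Nat.cast_sub hp, Nat.cast_sub hq]
  ring

/-- The differential operators of order at most `k`, as a left `ℂ[x,y]`-module. -/
def diffOpsLE (k : ℕ) : Submodule R2 (Module.End ℂ R2) :=
  Submodule.span R2 ((fun β : ℕ × ℕ => Dx ^ β.1 * Dy ^ β.2) '' ordIdx k)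

lemma mem_diffOpsLE {A : Module.End ℂ R2} {k : ℕ} : A ∈ diffOpsLE k ↔ IsDiffOpLE A k := by
  rw [diffOpsLE, Submodule.mem_span_image_finset_iff_exists_fun']
  exact exists_congr fun f => eq_comm

lemma homDeriv_mem_diffOpsLE (a : ℕ) {i j r k : ℕ} (h : i + j + r ≤ k) :
    homDeriv a i j r ∈ diffOpsLE k := by
  induction r generalizing i j with
  | zero =>
    rw [homDeriv_zero_right]
    exact Submodule.subset_span ⟨(i, j), mem_ordIdx.mpr h, rfl⟩
  | succ r ih =>
    rw [eq_sub_of_add_eq' (euler_identity_homDeriv a i j r)]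
    exact sub_mem (Submodule.smul_of_tower_mem _ _ (ih (by omega)))
      (add_mem (Submodule.smul_mem _ _ (ih (by omega))) (Submodule.smul_mem _ _ (ih (by omega))))

/-- The operator induced on `𝒯ₐ` by the derivative of order exactly `k` in `x, y, z` whose orders
in `x` and `y` are given by `β`. -/
def topHomDeriv (a k : ℕ) (β : ordIdx k) : Module.End ℂ R2 :=
  homDeriv a β.1.1 β.1.2 (k - β.1.1 - β.1.2)

lemma homDeriv_mem_span_topHomDeriv {a i j r k : ℕ} (h : i + j + r ≤ k) (hka : k ≤ a) :
    homDeriv a i j r ∈ Submodule.span R2 (Set.range (topHomDeriv a k)) := by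
  obtain ⟨m, hm⟩ := Nat.exists_eq_add_of_le h
  induction m generalizing i j r with
  | zero =>
    obtain rfl : r = k - i - j := by omega
    exact Submodule.subset_span ⟨⟨(i, j), mem_ordIdx.mpr (by omega)⟩, rfl⟩
  | succ m ih =>
    have hc : (a - i - j - r : ℂ) ≠ 0 := by
      rw [sub_sub, sub_sub, sub_ne_zero]
      exact_mod_cast (by omega : a ≠ i + (j + r))
    rw [← inv_smul_smul₀ hc (homDeriv a i j r), ← euler_identity_homDeriv]
    exact Submodule.smul_of_tower_mem _ _ (add_mem (add_mem
      (Submodule.smul_mem _ _ (ih (by omega) (by omega)))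
      (Submodule.smul_mem _ _ (ih (by omega) (by omega)))) (ih (by omega) (by omega)))

lemma span_topHomDeriv {a k : ℕ} (hka : k ≤ a) :
    Submodule.span R2 (Set.range (topHomDeriv a k)) = diffOpsLE k := by
  refine le_antisymm (Submodule.span_le.mpr ?_) (Submodule.span_le.mpr ?_)
  · rintro _ ⟨β, rfl⟩
    have hβ := mem_ordIdx.mp β.2
    exact homDeriv_mem_diffOpsLE a (by omega)
  · rintro _ ⟨β, hβ, rfl⟩
    rw [Finset.mem_coe, mem_ordIdx] at hβ
    change Dx ^ β.1 * Dy ^ β.2 ∈ _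
    rw [← homDeriv_zero_right a]
    exact homDeriv_mem_span_topHomDeriv hβ hka

lemma topHomDeriv_apply_mem_Tmod {a k : ℕ} (β : ordIdx k) {g : R2} (hg : g ∈ Tmod a) :
    topHomDeriv a k β g ∈ Tmod (a - k) := by
  suffices h : Tmod a ≤ (Tmod (a - k)).comap (topHomDeriv a k β) from h hg
  refine Submodule.span_le.mpr ?_
  rintro _ ⟨p, q, hpq, rfl⟩
  obtain ⟨s, hs⟩ := Nat.exists_eq_add_of_le hpq
  rcases eq_or_ne (topHomDeriv a k β (Xv ^ p * Yv ^ q)) 0 with h0 | hne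
  · rw [SetLike.mem_coe, Submodule.mem_comap, h0]
    exact zero_mem _
  · obtain ⟨hp, hq, hr⟩ := le_of_homDeriv_apply_ne_zero hs.symm hne
    change homDeriv _ _ _ _ _ ∈ Tmod (a - k)
    rw [homDeriv_apply_of_add_eq hs.symm]
    exact Submodule.smul_mem _ _ (Xv_pow_mul_Yv_pow_mem_Tmod (by omega))

/-- The operator `F ↦ ∑ f_β ∂^βF` on forms of degree `a`, where `∂^β` runs through the derivatives
of order exactly `k` in `x, y, z`. -/
def topCombination (a k : ℕ) : (ordIdx k → R2) →ₗ[ℂ] Module.End ℂ R2 :=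
  (Fintype.linearCombination R2 (topHomDeriv a k)).restrictScalars ℂ

lemma topCombination_apply_apply {a k : ℕ} (f : ordIdx k → R2) (g : R2) :
    topCombination a k f g = ∑ β, f β * topHomDeriv a k β g := by
  simp [topCombination, Fintype.linearCombination_apply]

lemma mem_range_topCombination {a k : ℕ} (hka : k ≤ a) {A : Module.End ℂ R2} :
    A ∈ LinearMap.range (topCombination a k) ↔ A ∈ diffOpsLE k := by
  rw [← span_topHomDeriv hka, ← Fintype.range_linearCombination]
  rfl

/-- On the form `x^β₁ y^(a-k+β₂) z^(k-β₁-β₂)` every derivative of order `k` vanishes, apart from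
`∂^β` and those `∂^γ` with `γ₂ > β₂`. -/
lemma topHomDeriv_apply_eq_zero {a k : ℕ} (hka : k ≤ a) {β γ : ordIdx k} (hne : γ ≠ β)
    (hle : γ.1.2 ≤ β.1.2) : topHomDeriv a k γ (Xv ^ β.1.1 * Yv ^ (a - k + β.1.2)) = 0 := by
  by_contra h0
  have hβ := mem_ordIdx.mp β.2
  have hγ := mem_ordIdx.mp γ.2
  obtain ⟨hx, -, hz⟩ :=
    le_of_homDeriv_apply_ne_zero (s := k - β.1.1 - β.1.2) (by omega) h0
  exact hne (Subtype.ext (Prod.ext (by omega) (by omega)))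

lemma exists_topHomDeriv_apply_eq_smul {a k : ℕ} (hka : k ≤ a) (β : ordIdx k) :
    ∃ c : ℂ, c ≠ 0 ∧
      topHomDeriv a k β (Xv ^ β.1.1 * Yv ^ (a - k + β.1.2)) = c • Yv ^ (a - k) := by
  have hβ := mem_ordIdx.mp β.2
  have h := homDeriv_apply_of_add_eq (a := a) (p := β.1.1) (q := a - k + β.1.2)
    (s := k - β.1.1 - β.1.2) (by omega) β.1.1 β.1.2 (k - β.1.1 - β.1.2)
  rw [Nat.sub_self, Nat.add_sub_cancel, pow_zero, one_mul] at h
  exact ⟨_, by simp [Nat.descFactorial_eq_zero_iff_lt], h⟩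

lemma coeff_mem_of_topCombination_apply_mem {a k : ℕ} (hka : k ≤ a) {P Q : Submodule ℂ R2}
    (hmul : ∀ f ∈ P, ∀ g ∈ Tmod (a - k), f * g ∈ Q)
    (hdiv : ∀ f, f * Yv ^ (a - k) ∈ Q → f ∈ P) {f : ordIdx k → R2}
    (hf : ∀ g ∈ Tmod a, topCombination a k f g ∈ Q) (β : ordIdx k) : f β ∈ P := by
  have hβ := mem_ordIdx.mp β.2
  induction hm : k - β.1.2 using Nat.strong_induction_on generalizing β with
  | _ m ih =>
    set g : R2 := Xv ^ β.1.1 * Yv ^ (a - k + β.1.2)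
    have hg : g ∈ Tmod a := Xv_pow_mul_Yv_pow_mem_Tmod (by omega)
    have hrest : ∑ γ ∈ Finset.univ.erase β, f γ * topHomDeriv a k γ g ∈ Q := by
      refine sum_mem fun γ hγ => ?_
      rcases le_or_gt γ.1.2 β.1.2 with hle | hlt
      · rw [topHomDeriv_apply_eq_zero hka (Finset.ne_of_mem_erase hγ) hle, mul_zero]
        exact zero_mem _
      · have hγ' := mem_ordIdx.mp γ.2
        exact hmul _ (ih _ (by omega) γ hγ' rfl) _ (topHomDeriv_apply_mem_Tmod γ hg)
    have hterm : f β * topHomDeriv a k β g ∈ Q := by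
      have hsum := hf g hg
      rw [topCombination_apply_apply, ← Finset.add_sum_erase _ _ (Finset.mem_univ β)] at hsum
      exact (Submodule.add_mem_iff_left _ hrest).mp hsum
    obtain ⟨c, hc, hcg⟩ := exists_topHomDeriv_apply_eq_smul hka β
    rw [hcg, mul_smul_comm, Submodule.smul_mem_iff _ hc] at hterm
    exact hdiv _ hterm

lemma topCombination_injective {a k : ℕ} (hka : k ≤ a) :
    Function.Injective (topCombination a k) := by
  refine (injective_iff_map_eq_zero _).mpr fun f hf => funext fun β => ?_
  have hY : (Yv : R2) ^ (a - k) ≠ 0 := pow_ne_zero _ (X_ne_zero 1)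
  refine (Submodule.mem_bot ℂ).mp (coeff_mem_of_topCombination_apply_mem hka (Q := ⊥)
    (fun f hf g _ => ?_) (fun f hf => ?_) (fun g _ => ?_) β)
  · rw [(Submodule.mem_bot ℂ).mp hf, zero_mul]
    exact zero_mem _
  · exact (mul_eq_zero.mp hf).resolve_right hY
  · rw [hf]
    exact zero_mem _

lemma topCombination_mapsTo_Tmod_iff {a b k d : ℕ} (hka : k ≤ a) (hd : b + k = a + d)
    {f : ordIdx k → R2} :
    (∀ g ∈ Tmod a, topCombination a k f g ∈ Tmod b) ↔ ∀ β, f β ∈ Tmod d := by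
  obtain rfl : b = d + (a - k) := by omega
  constructor
  · exact coeff_mem_of_topCombination_apply_mem hka (fun f hf g hg => mul_mem_Tmod hf hg)
      fun f hf => mem_Tmod_of_mul_Yv_pow_mem hf
  · intro hf g hg
    rw [topCombination_apply_apply]
    exact sum_mem fun β _ => mul_mem_Tmod (hf β) (topHomDeriv_apply_mem_Tmod β hg)

/-- The differential operators of order at most `k` which map `𝒯ₐ` into `𝒯_b`. -/
def triangularDiffOps (a b k : ℕ) : Submodule ℂ (Module.End ℂ R2) :=
  (diffOpsLE k).restrictScalars ℂ ⊓ Submodule.compatibleMaps (Tmod a) (Tmod b)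

lemma mem_triangularDiffOps {a b k : ℕ} {A : Module.End ℂ R2} :
    A ∈ triangularDiffOps a b k ↔ IsDiffOpLE A k ∧ ∀ f ∈ Tmod a, A f ∈ Tmod b :=
  and_congr_left' mem_diffOpsLE

lemma range_topCombination_comp_compLeft {a b k d : ℕ} (hka : k ≤ a) (hd : b + k = a + d) :
    LinearMap.range (topCombination a k ∘ₗ (Tmod d).subtype.compLeft (ordIdx k)) =
      triangularDiffOps a b k := by
  ext A
  rw [LinearMap.range_comp, LinearMap.range_compLeft, mem_triangularDiffOps, ← mem_diffOpsLE,
    ← mem_range_topCombination hka]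
  simp only [Submodule.mem_map, Submodule.mem_pi, Submodule.range_subtype]
  constructor
  · rintro ⟨f, hf, rfl⟩
    exact ⟨⟨f, rfl⟩, (topCombination_mapsTo_Tmod_iff hka hd).mpr fun β => hf β trivial⟩
  · rintro ⟨⟨f, rfl⟩, hf⟩
    exact ⟨f, fun β _ => (topCombination_mapsTo_Tmod_iff hka hd).mp hf β, rfl⟩

/-- An operator of order at most `k` from `𝒯ₐ` to `𝒯_b` amounts to its coefficients with respect to
the derivatives of order exactly `k` in `x, y, z`, which are arbitrary elements of `𝒯_{b+k-a}`. -/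
def triangularDiffOpsEquiv {a b k d : ℕ} (hka : k ≤ a) (hd : b + k = a + d) :
    (ordIdx k → Tmod d) ≃ₗ[ℂ] triangularDiffOps a b k :=
  LinearEquiv.ofInjective (topCombination a k ∘ₗ (Tmod d).subtype.compLeft (ordIdx k))
    ((topCombination_injective hka).comp (Tmod d).injective_subtype.comp_left) ≪≫ₗ
      LinearEquiv.ofEq _ _ (range_topCombination_comp_compLeft hka hd)

-- Instance search does not find this by itself for submodules of `Module.End ℂ R2`.
instance free_triangularDiffOps (a b k : ℕ) : Module.Free ℂ (triangularDiffOps a b k) :=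
  Module.Free.of_divisionRing ℂ (triangularDiffOps a b k)

lemma finite_triangularDiffOps {a b k : ℕ} (hka : k ≤ a) (hab : a ≤ b + k) :
    Module.Finite ℂ (triangularDiffOps a b k) :=
  Module.Finite.equiv (triangularDiffOpsEquiv hka (Nat.add_sub_of_le hab).symm)

lemma finrank_triangularDiffOps {a b k d : ℕ} (hka : k ≤ a) (hd : b + k = a + d) :
    Module.finrank ℂ (triangularDiffOps a b k) = (ordIdx k).card * (ordIdx d).card := by
  rw [← (triangularDiffOpsEquiv hka hd).finrank_eq, Module.finrank_pi_fintype,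
    Finset.sum_const, Finset.card_univ, Fintype.card_coe, finrank_Tmod, smul_eq_mul]

/-- `matOp` as an equivalence: every endomorphism of `V` is a matrix of endomorphisms. -/
def matOpEquiv : ((Module.End ℂ R2 × Module.End ℂ R2) × (Module.End ℂ R2 × Module.End ℂ R2)) ≃ₗ[ℂ]
    Module.End ℂ V2 :=
  ((LinearMap.coprodEquiv ℂ).prodCongr (LinearMap.coprodEquiv ℂ)) ≪≫ₗ LinearMap.prodEquiv ℂ

lemma matOp_mapsTo_prod_iff {A B C D : Module.End ℂ R2} {M N : Submodule ℂ R2} :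
    (∀ w ∈ M.prod N, matOp A B C D w ∈ M.prod N) ↔
      ((∀ f ∈ M, A f ∈ M) ∧ ∀ f ∈ N, B f ∈ M) ∧ (∀ f ∈ M, C f ∈ N) ∧ ∀ f ∈ N, D f ∈ N := by
  constructor
  · intro h
    have hM : ∀ f ∈ M, A f ∈ M ∧ C f ∈ N := fun f hf => by
      simpa [matOp] using h (f, 0) ⟨hf, zero_mem N⟩
    have hN : ∀ f ∈ N, B f ∈ M ∧ D f ∈ N := fun f hf => by
      simpa [matOp] using h (0, f) ⟨zero_mem M, hf⟩
    exact ⟨⟨fun f hf => (hM f hf).1, fun f hf => (hN f hf).1⟩,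
      fun f hf => (hM f hf).2, fun f hf => (hN f hf).2⟩
  · rintro ⟨⟨hA, hB⟩, hC, hD⟩ ⟨f, g⟩ ⟨hf, hg⟩
    exact ⟨add_mem (hA f hf) (hB g hg), add_mem (hC f hf) (hD g hg)⟩

/-- The matrix operator with entries `𝒯ₐ → 𝒯ₐ`, `𝒯_b → 𝒯ₐ` in the first row and `𝒯ₐ → 𝒯_b`,
`𝒯_b → 𝒯_b` in the second. -/
def triangularMatOp (a b k : ℕ) :
    ((triangularDiffOps a a k × triangularDiffOps b a k) ×
      (triangularDiffOps a b k × triangularDiffOps b b k)) →ₗ[ℂ] Module.End ℂ V2 :=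
  matOpEquiv ∘ₗ
    ((Submodule.subtype _).prodMap (Submodule.subtype _)).prodMap
      ((Submodule.subtype _).prodMap (Submodule.subtype _))

lemma triangularMatOp_injective (a b k : ℕ) : Function.Injective (triangularMatOp a b k) :=
  matOpEquiv.injective.comp
    ((Subtype.val_injective.prodMap Subtype.val_injective).prodMap
      (Subtype.val_injective.prodMap Subtype.val_injective))

lemma mem_range_triangularMatOp {a b k : ℕ} {T : Module.End ℂ V2} :
    T ∈ LinearMap.range (triangularMatOp a b k) ↔ IsMatDiffOpLE T k ∧
      ∀ w ∈ (Tmod a).prod (Tmod b), T w ∈ (Tmod a).prod (Tmod b) := by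
  constructor
  · rintro ⟨⟨⟨⟨A, hA⟩, ⟨B, hB⟩⟩, ⟨C, hC⟩, ⟨D, hD⟩⟩, rfl⟩
    rw [mem_triangularDiffOps] at hA hB hC hD
    exact ⟨⟨A, B, C, D, hA.1, hB.1, hC.1, hD.1, rfl⟩,
      matOp_mapsTo_prod_iff.mpr ⟨⟨hA.2, hB.2⟩, hC.2, hD.2⟩⟩
  · rintro ⟨⟨A, B, C, D, hA, hB, hC, hD, rfl⟩, hT⟩
    obtain ⟨⟨hA', hB'⟩, hC', hD'⟩ := matOp_mapsTo_prod_iff.mp hT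
    exact ⟨((⟨A, mem_triangularDiffOps.mpr ⟨hA, hA'⟩⟩, ⟨B, mem_triangularDiffOps.mpr ⟨hB, hB'⟩⟩),
      (⟨C, mem_triangularDiffOps.mpr ⟨hC, hC'⟩⟩, ⟨D, mem_triangularDiffOps.mpr ⟨hD, hD'⟩⟩)), rfl⟩

lemma finrank_range_triangularMatOp {a b k d e : ℕ} (hka : k ≤ a) (hkb : k ≤ b)
    (hd : b + k = a + d) (he : a + k = b + e) :
    Module.finrank ℂ (LinearMap.range (triangularMatOp a b k)) =
      (ordIdx k).card * (2 * (ordIdx k).card + (ordIdx d).card + (ordIdx e).card) := by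
  have := finite_triangularDiffOps (b := a) hka (by omega)
  have := finite_triangularDiffOps (b := b) hka (by omega)
  have := finite_triangularDiffOps (b := a) hkb (by omega)
  have := finite_triangularDiffOps (b := b) hkb (by omega)
  rw [LinearMap.finrank_range_of_inj (triangularMatOp_injective a b k), Module.finrank_prod,
    Module.finrank_prod, Module.finrank_prod, finrank_triangularDiffOps hka rfl,
    finrank_triangularDiffOps hkb he, finrank_triangularDiffOps hka hd,
    finrank_triangularDiffOps hkb rfl]
  ring

theorem stmt17 (n Δ k : ℕ) (hΔk : Δ ≤ k) (hkn : k + Δ ≤ n) :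
    2 * Module.finrank ℂ ↥(Submodule.span ℂ
      {T : Module.End ℂ V2 | IsMatDiffOpLE T k ∧
        ∀ w ∈ (Tmod (n - Δ)).prod (Tmod n), T w ∈ (Tmod (n - Δ)).prod (Tmod n)}) =
      (k + 1) * (k + 2) * (2 * k ^ 2 + 6 * k + 4 + Δ ^ 2) := by
  obtain ⟨a, rfl⟩ := Nat.exists_eq_add_of_le' (Nat.le_of_add_left_le hkn)
  obtain ⟨e, rfl⟩ := Nat.exists_eq_add_of_le' hΔk
  have hrange : {T : Module.End ℂ V2 | IsMatDiffOpLE T (e + Δ) ∧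
      ∀ w ∈ (Tmod a).prod (Tmod (a + Δ)), T w ∈ (Tmod a).prod (Tmod (a + Δ))} =
        LinearMap.range (triangularMatOp a (a + Δ) (e + Δ)) :=
    Set.ext fun _ => mem_range_triangularMatOp.symm
  rw [Nat.add_sub_cancel, hrange, Submodule.span_eq,
    finrank_range_triangularMatOp (d := e + 2 * Δ) (e := e) (by omega) (by omega) (by omega)
      (by omega)]
  have hk := card_ordIdx_mul_two (e + Δ)
  have hsum : 2 * (ordIdx (e + Δ)).card + (ordIdx (e + 2 * Δ)).card + (ordIdx e).card =
      2 * (e + Δ) ^ 2 + 6 * (e + Δ) + 4 + Δ ^ 2 := by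
    linarith [card_ordIdx_mul_two (e + 2 * Δ), card_ordIdx_mul_two e]
  rw [hsum, ← hk]
  ring
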